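/- Let M, L, w be positive integers and let S be a w-element subset of {1,...,M} × Z_L, and for i ∈ {1,...,M} write S_i = {t ∈ Z_L : (i,t) ∈ S}. If every prime factor of L is at least 2w - 1, then S is not exceptional; that is, there is no index i with |S_i - S_i| ≤ 2|S_i| - 2, and there are no distinct indices i, j with |S_i - S_j| ≤ |S_i| + |S_j| - 2. -/

import Mathlib

/-- The difference set `A - B = {a - b : a ∈ A, b ∈ B}` in `Z_L`. -/
def fdiff {L : ℕ} (A B : Finset (ZMod L)) : Finset (ZMod L) :=
  (A ×ˢ B).image fun p => p.1 - p.2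

/-- The set of time slots used by codeword `S` on channel `i`. -/
def chan {M L : ℕ} (S : Finset (Fin M × ZMod L)) (i : Fin M) : Finset (ZMod L) :=
  (S.filter fun p => p.1 = i).image Prod.snd

/-!
The order of a nonzero torsion element of `ZMod L` is a divisor of `L` other than `1`, so it is at
least some prime factor of `L`. Hence a lower bound on the prime factors bounds from below the size
of every nontrivial subgroup, and the generalised Cauchy-Davenport inequality
`min (minOrder G) (#s + #t - 1) ≤ #(s + t)`, applied to `S_i` and `-S_j`, is governed by its
second term: `#S_i + #S_j - 1 ≤ 2 * w - 1`.
-/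

open scoped Pointwise

theorem le_minOrder_of_forall_prime_dvd_exponent {G : Type*} [AddMonoid G] {n : ℕ}
    (h : ∀ p : ℕ, p.Prime → p ∣ AddMonoid.exponent G → n ≤ p) :
    (n : ℕ∞) ≤ AddMonoid.minOrder G := by
  refine AddMonoid.le_minOrder.2 fun a ha_ne ha_fin => Nat.cast_le.2 ?_
  have order_ne_one : addOrderOf a ≠ 1 := mt AddMonoid.addOrderOf_eq_one_iff.1 ha_ne
  calc
    n ≤ (addOrderOf a).minFac :=
      h _ (Nat.minFac_prime order_ne_one)
        ((Nat.minFac_dvd _).trans (AddMonoid.addOrder_dvd_exponent a))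
    _ ≤ addOrderOf a := Nat.minFac_le ha_fin.addOrderOf_pos

theorem card_add_card_sub_one_le_card_sub {G : Type*} [AddGroup G] [DecidableEq G]
    {s t : Finset G} (hs : s.Nonempty) (ht : t.Nonempty)
    (h : ((s.card + t.card - 1 : ℕ) : ℕ∞) ≤ AddMonoid.minOrder G) :
    s.card + t.card - 1 ≤ (s - t).card := by
  have cauchy_davenport := cauchy_davenport_minOrder_add hs ht.neg
  rwa [Finset.card_neg, ← sub_eq_add_neg, min_eq_right h, Nat.cast_le] at cauchy_davenport

theorem fdiff_eq_sub {L : ℕ} (A B : Finset (ZMod L)) : fdiff A B = A - B :=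
  Finset.image_sub_product

theorem card_add_card_sub_one_le_card_fdiff {L : ℕ} {A B : Finset (ZMod L)}
    (hA : A.Nonempty) (hB : B.Nonempty)
    (hprime : ∀ p : ℕ, p.Prime → p ∣ L → A.card + B.card - 1 ≤ p) :
    A.card + B.card - 1 ≤ (fdiff A B).card := by
  rw [fdiff_eq_sub]
  refine card_add_card_sub_one_le_card_sub hA hB (le_minOrder_of_forall_prime_dvd_exponent ?_)
  rwa [ZMod.exponent]

theorem card_chan_le {M L : ℕ} (S : Finset (Fin M × ZMod L)) (i : Fin M) :
    (chan S i).card ≤ S.card :=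
  Finset.card_image_le.trans (Finset.card_filter_le _ _)

theorem card_chan_add_card_chan_sub_one_le_card_fdiff {M L : ℕ} {S : Finset (Fin M × ZMod L)}
    (hprime : ∀ p : ℕ, p.Prime → p ∣ L → 2 * S.card - 1 ≤ p) {i j : Fin M}
    (hi : (chan S i).Nonempty) (hj : (chan S j).Nonempty) :
    (chan S i).card + (chan S j).card - 1 ≤ (fdiff (chan S i) (chan S j)).card := by
  refine card_add_card_sub_one_le_card_fdiff hi hj fun p hp hpL => ?_
  have card_i_le := card_chan_le S i
  have card_j_le := card_chan_le S j
  have two_card_sub_one_le := hprime p hp hpL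
  omega

theorem stmt_19 (M L w : ℕ) (hM : 0 < M) (hL : 0 < L) (hw : 0 < w)
    (hprime : ∀ p : ℕ, p.Prime → p ∣ L → 2 * w - 1 ≤ p)
    (S : Finset (Fin M × ZMod L)) (hS : S.card = w) :
    (∀ i : Fin M,
      ¬ ((fdiff (chan S i) (chan S i)).card : ℤ) ≤ 2 * ((chan S i).card : ℤ) - 2) ∧
    (∀ i j : Fin M, i ≠ j → (chan S i).Nonempty → (chan S j).Nonempty →
      ¬ ((fdiff (chan S i) (chan S j)).card : ℤ) ≤
          ((chan S i).card : ℤ) + ((chan S j).card : ℤ) - 2) := by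
  subst hS
  refine ⟨fun i => ?_, fun i j _ hi hj => ?_⟩
  · rcases (chan S i).eq_empty_or_nonempty with hi | hi
    · rw [hi, Finset.card_empty]
      omega
    · have card_le := card_chan_add_card_chan_sub_one_le_card_fdiff hprime hi hi
      omega
  · have card_le := card_chan_add_card_chan_sub_one_le_card_fdiff hprime hi hj
    omega
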